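/- Let X=[0,1]^ℤ with the metric d(x,y)=Σ_{n∈ℤ} 2^{−|n|}|x_n−y_n|, let σ:X→X be the left shift, and let μ=L^{⊗ℤ} be the product of Lebesgue measure on [0,1]. Then the upper and lower metric mean dimensions of (X,σ,d) both equal 1, and lim_{ε→0} (1/log(1/ε)) · inf{ h_μ(σ,P) : P a finite Borel partition of X with diam P ≤ ε } = 1; in particular the metric mean dimension equals the Rényi information dimension of μ. -/

import Mathlib

open Filter MeasureTheory Set
open scoped ENNReal Topology

noncomputable section

namespace MMD

variable {X : Type*}

/-- The `n`-th Bowen metric `d_n(x,y) = max_{0 ≤ j ≤ n-1} d(T^j x, T^j y)`. -/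
noncomputable def bowenDist [PseudoMetricSpace X] (T : X → X) (n : ℕ) (x y : X) : ℝ :=
  ⨆ j : Fin n, dist (T^[(j : ℕ)] x) (T^[(j : ℕ)] y)

/-- `r_n(T,d,ε,Z)`: minimal cardinality of an `(n,ε)`-spanning set of `Z`. -/
noncomputable def spanNum [PseudoMetricSpace X] (T : X → X) (n : ℕ) (ε : ℝ) (Z : Set X) : ℕ :=
  sInf {k | ∃ E : Finset X, E.card = k ∧ ∀ z ∈ Z, ∃ y ∈ E, bowenDist T n z y < ε}

/-- `s_n(T,d,ε,Z)`: maximal cardinality of an `(n,ε)`-separated subset of `Z`. -/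
noncomputable def sepNum [PseudoMetricSpace X] (T : X → X) (n : ℕ) (ε : ℝ) (Z : Set X) : ℕ :=
  sSup {k | ∃ F : Finset X, ↑F ⊆ Z ∧ F.card = k ∧
    ∀ x ∈ F, ∀ y ∈ F, x ≠ y → ε ≤ bowenDist T n x y}

/-- `limsup_{n→∞} (1/n) log r_n(T,d,ε,X)`. -/
noncomputable def spanGrowth [PseudoMetricSpace X] (T : X → X) (ε : ℝ) : ℝ≥0∞ :=
  Filter.limsup (fun n : ℕ => ENNReal.ofReal (Real.log (spanNum T n ε Set.univ)) / (n : ℝ≥0∞))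
    Filter.atTop

/-- Upper metric mean dimension. -/
noncomputable def mdimMUpper [PseudoMetricSpace X] (T : X → X) : ℝ≥0∞ :=
  Filter.limsup (fun ε : ℝ => spanGrowth T ε / ENNReal.ofReal (Real.log (1 / ε)))
    (nhdsWithin 0 (Set.Ioi 0))

/-- Lower metric mean dimension. -/
noncomputable def mdimMLower [PseudoMetricSpace X] (T : X → X) : ℝ≥0∞ :=
  Filter.liminf (fun ε : ℝ => spanGrowth T ε / ENNReal.ofReal (Real.log (1 / ε)))
    (nhdsWithin 0 (Set.Ioi 0))

/-- A finite (Borel) partition given as a finite set of measurable, pairwise disjoint sets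
covering the space. -/
def IsFinPartition {Y : Type*} [MeasurableSpace Y] (P : Finset (Set Y)) : Prop :=
  (∀ s ∈ P, MeasurableSet s) ∧ (∀ s ∈ P, ∀ t ∈ P, s ≠ t → Disjoint s t) ∧
    ⋃₀ (P : Set (Set Y)) = Set.univ

/-- Mutual information `I(ξ;η)` of two random variables, as the supremum over finite
measurable partitions of the target spaces. -/
noncomputable def mutualInfo {Ω A B : Type*} [MeasurableSpace Ω] [MeasurableSpace A]
    [MeasurableSpace B] (P : Measure Ω) (ξ : Ω → A) (η : Ω → B) : ℝ≥0∞ :=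
  ⨆ (p : Finset (Set A)) (_ : IsFinPartition p) (q : Finset (Set B)) (_ : IsFinPartition q),
    ENNReal.ofReal (∑ s ∈ p, ∑ t ∈ q,
      (P (ξ ⁻¹' s ∩ η ⁻¹' t)).toReal *
        Real.log ((P (ξ ⁻¹' s ∩ η ⁻¹' t)).toReal /
          ((P (ξ ⁻¹' s)).toReal * (P (η ⁻¹' t)).toReal)))

/-- The `L^∞` rate distortion function `R_{μ,L∞}(ε,s)`: the infimum of `I(ξ;η)/n` over all
`n ≥ 1` and all joint distributions `ν` of `(ξ, (η_0,…,η_{n-1}))` such that `ξ` has law `μ`,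
the `η_k` take (almost surely) finitely many values, and
`E(#{0 ≤ k ≤ n-1 : d(T^k ξ, η_k) ≥ ε}) < s n`. -/
noncomputable def RDistLInftyS [PseudoMetricSpace X] [MeasurableSpace X] (T : X → X)
    (μ : Measure X) (ε s : ℝ) : ℝ≥0∞ :=
  ⨅ (n : ℕ) (_ : 0 < n) (ν : Measure (X × (Fin n → X))) (_ : IsProbabilityMeasure ν)
    (_ : ν.map Prod.fst = μ) (_ : ∃ S : Finset X, ν {p | ∀ k, p.2 k ∈ S} = 1)
    (_ : ∫⁻ p, (Nat.card {k : Fin n // ε ≤ dist (T^[(k : ℕ)] p.1) (p.2 k)} : ℝ≥0∞) ∂ν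
        < ENNReal.ofReal (s * n)),
    mutualInfo ν Prod.fst Prod.snd / (n : ℝ≥0∞)

/-- `R_{μ,L∞}(ε) = lim_{s→0} R_{μ,L∞}(ε,s)` (the limit equals the supremum over `s > 0`
by monotonicity). -/
noncomputable def RDistLInfty [PseudoMetricSpace X] [MeasurableSpace X] (T : X → X)
    (μ : Measure X) (ε : ℝ) : ℝ≥0∞ :=
  ⨆ (s : ℝ) (_ : 0 < s), RDistLInftyS T μ ε s

/-- The `L¹` rate distortion function `R_{μ,1}(ε)`. -/
noncomputable def RDistL1 [PseudoMetricSpace X] [MeasurableSpace X] (T : X → X)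
    (μ : Measure X) (ε : ℝ) : ℝ≥0∞ :=
  ⨅ (n : ℕ) (_ : 0 < n) (ν : Measure (X × (Fin n → X))) (_ : IsProbabilityMeasure ν)
    (_ : ν.map Prod.fst = μ) (_ : ∃ S : Finset X, ν {p | ∀ k, p.2 k ∈ S} = 1)
    (_ : ∫⁻ p, ∑ k : Fin n, ENNReal.ofReal (dist (T^[(k : ℕ)] p.1) (p.2 k)) ∂ν
        < ENNReal.ofReal (ε * n)),
    mutualInfo ν Prod.fst Prod.snd / (n : ℝ≥0∞)

/-- `R^δ_μ(T,n,ε)`: minimal number of Bowen `(n,ε)`-balls whose union has `μ`-measure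
greater than `1 - δ`. -/
noncomputable def katokNum [PseudoMetricSpace X] [MeasurableSpace X] (T : X → X)
    (μ : Measure X) (n : ℕ) (ε δ : ℝ) : ℕ :=
  sInf {k | ∃ E : Finset X, E.card = k ∧
    ENNReal.ofReal (1 - δ) < μ (⋃ x ∈ E, {y | bowenDist T n x y < ε})}

/-- `h̄^K_μ(T,ε,δ)`. -/
noncomputable def katokUpperD [PseudoMetricSpace X] [MeasurableSpace X] (T : X → X)
    (μ : Measure X) (ε δ : ℝ) : ℝ≥0∞ :=
  Filter.limsup (fun n : ℕ => ENNReal.ofReal (Real.log (katokNum T μ n ε δ)) / (n : ℝ≥0∞))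
    Filter.atTop

/-- `ḥ^K_μ(T,ε,δ)`. -/
noncomputable def katokLowerD [PseudoMetricSpace X] [MeasurableSpace X] (T : X → X)
    (μ : Measure X) (ε δ : ℝ) : ℝ≥0∞ :=
  Filter.liminf (fun n : ℕ => ENNReal.ofReal (Real.log (katokNum T μ n ε δ)) / (n : ℝ≥0∞))
    Filter.atTop

/-- `h̄^K_μ(T,ε) = lim_{δ→0} h̄^K_μ(T,ε,δ)` (equal to the supremum over `δ ∈ (0,1)` by
monotonicity). -/
noncomputable def katokUpper [PseudoMetricSpace X] [MeasurableSpace X] (T : X → X)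
    (μ : Measure X) (ε : ℝ) : ℝ≥0∞ :=
  ⨆ (δ : ℝ) (_ : δ ∈ Set.Ioo (0 : ℝ) 1), katokUpperD T μ ε δ

/-- `ḥ^K_μ(T,ε) = lim_{δ→0} ḥ^K_μ(T,ε,δ)`. -/
noncomputable def katokLower [PseudoMetricSpace X] [MeasurableSpace X] (T : X → X)
    (μ : Measure X) (ε : ℝ) : ℝ≥0∞ :=
  ⨆ (δ : ℝ) (_ : δ ∈ Set.Ioo (0 : ℝ) 1), katokLowerD T μ ε δ

/-- The empirical measure `(1/n) Σ_{j=0}^{n-1} δ_{T^j x}`. -/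
noncomputable def empMeas [MeasurableSpace X] (T : X → X) (n : ℕ) (x : X) : Measure X :=
  (n : ℝ≥0∞)⁻¹ • ∑ j ∈ Finset.range n, Measure.dirac (T^[j] x)

/-- Pfister–Sullivan entropy `PS_μ(T,d,ε)`: infimum over weak* open neighborhoods `F` of `μ`
of `limsup_n (1/n) log s_n(T,d,ε,X_{n,F})`, where
`X_{n,F} = {x : (1/n) Σ_{j<n} δ_{T^j x} ∈ F}`. -/
noncomputable def PSent [MetricSpace X] [MeasurableSpace X] [OpensMeasurableSpace X]
    (T : X → X) (μ : ProbabilityMeasure X) (ε : ℝ) : ℝ≥0∞ :=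
  ⨅ (F : Set (ProbabilityMeasure X)) (_ : IsOpen F) (_ : μ ∈ F),
    Filter.limsup (fun n : ℕ => ENNReal.ofReal (Real.log (sepNum T n ε
      {x : X | ∃ h : IsProbabilityMeasure (empMeas T n x),
        (⟨empMeas T n x, h⟩ : ProbabilityMeasure X) ∈ F})) / (n : ℝ≥0∞)) Filter.atTop

/-- Partition entropy `H_μ(P) = Σ_{A∈P} -μ(A) log μ(A)`. -/
noncomputable def entP [MeasurableSpace X] (μ : Measure X) (P : Finset (Set X)) : ℝ≥0∞ :=
  ∑ A ∈ P, ENNReal.ofReal (-((μ A).toReal * Real.log ((μ A).toReal)))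

/-- The join `P^n = ∨_{j=0}^{n-1} T^{-j} P`. -/
noncomputable def joinN (T : X → X) (P : Finset (Set X)) (n : ℕ) : Finset (Set X) :=
  letI : DecidableEq (Set X) := Classical.decEq _
  (Fintype.piFinset (fun _ : Fin n => P)).image (fun f => ⋂ j : Fin n, T^[(j : ℕ)] ⁻¹' f j)

/-- `h_μ(T,P) = lim_n H_μ(P^n)/n` (the limit exists and equals the liminf). -/
noncomputable def entRate [MeasurableSpace X] (T : X → X) (μ : Measure X)
    (P : Finset (Set X)) : ℝ≥0∞ :=
  Filter.liminf (fun n : ℕ => entP μ (joinN T P n) / (n : ℝ≥0∞)) Filter.atTop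

/-- `inf { h_μ(T,P) : P a finite Borel partition with diam P ≤ ε }`. -/
noncomputable def infEntRate [PseudoMetricSpace X] [MeasurableSpace X] (T : X → X)
    (μ : Measure X) (ε : ℝ) : ℝ≥0∞ :=
  ⨅ (P : Finset (Set X)) (_ : IsFinPartition P) (_ : ∀ s ∈ P, Metric.diam s ≤ ε),
    entRate T μ P

/-- Kolmogorov–Sinai entropy `h_μ(T)`. -/
noncomputable def ksEntropy [MeasurableSpace X] (T : X → X) (μ : Measure X) : ℝ≥0∞ :=
  ⨆ (P : Finset (Set X)) (_ : IsFinPartition P), entRate T μ P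

/-- A finite open cover. -/
def IsFinOpenCover [TopologicalSpace X] (α : Finset (Set X)) : Prop :=
  (∀ A ∈ α, IsOpen A) ∧ ⋃₀ (α : Set (Set X)) = Set.univ

/-- `ord(β) = max_x #{B ∈ β : x ∈ B} - 1`. -/
noncomputable def ordCover (β : Finset (Set X)) : ℕ :=
  sSup {k | ∃ x : X, Nat.card {B : Set X // B ∈ β ∧ x ∈ B} = k} - 1

/-- `D(α) = min_{β ≻ α} ord(β)`, over finite open covers `β` refining `α`. -/
noncomputable def Dcover [TopologicalSpace X] (α : Finset (Set X)) : ℕ :=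
  sInf {k | ∃ β : Finset (Set X), IsFinOpenCover β ∧ (∀ B ∈ β, ∃ A ∈ α, B ⊆ A) ∧
    ordCover β = k}

/-- Mean (topological) dimension `mdim(X,T) = sup_α lim_n D(α^n)/n`. -/
noncomputable def mdimTop [TopologicalSpace X] (T : X → X) : ℝ≥0∞ :=
  ⨆ (α : Finset (Set X)) (_ : IsFinOpenCover α),
    Filter.liminf (fun n : ℕ => (Dcover (joinN T α n) : ℝ≥0∞) / (n : ℝ≥0∞)) Filter.atTop

/-- The marker property for a homeomorphism. -/
def MarkerProperty [TopologicalSpace X] (T : X ≃ₜ X) : Prop :=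
  ∀ N : ℕ, 0 < N → ∃ U : Set X, IsOpen U ∧
    (∀ n : ℕ, 1 ≤ n → n ≤ N → U ∩ (⇑T)^[n] '' U = ∅) ∧
    ⋃ n : ℤ, ⇑(T.toEquiv ^ n) '' U = Set.univ

/-- Upper dimension `limsup_{ε→0} F(μ,ε)/log(1/ε)` associated with a candidate `F`. -/
noncomputable def dimFUpper [MeasurableSpace X] (F : Measure X → ℝ → ℝ≥0∞)
    (μ : Measure X) : ℝ≥0∞ :=
  Filter.limsup (fun ε : ℝ => F μ ε / ENNReal.ofReal (Real.log (1 / ε)))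
    (nhdsWithin 0 (Set.Ioi 0))

/-- Lower dimension `liminf_{ε→0} F(μ,ε)/log(1/ε)` associated with a candidate `F`. -/
noncomputable def dimFLower [MeasurableSpace X] (F : Measure X → ℝ → ℝ≥0∞)
    (μ : Measure X) : ℝ≥0∞ :=
  Filter.liminf (fun ε : ℝ => F μ ε / ENNReal.ofReal (Real.log (1 / ε)))
    (nhdsWithin 0 (Set.Ioi 0))

/-- A candidate function: for each invariant probability measure `μ`, `F(μ,·)` is
non-decreasing as `ε` decreases, and `F(μ,ε) → h_μ(T)` as `ε → 0⁺`. -/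
def IsCandidate [MeasurableSpace X] (T : X → X) (F : Measure X → ℝ → ℝ≥0∞) : Prop :=
  ∀ μ : Measure X, IsProbabilityMeasure μ → MeasurePreserving T μ μ →
    (∀ ε₁ ε₂ : ℝ, 0 < ε₁ → ε₁ ≤ ε₂ → F μ ε₂ ≤ F μ ε₁) ∧
    Filter.Tendsto (F μ) (nhdsWithin 0 (Set.Ioi 0)) (nhds (ksEntropy T μ))

end MMD

open MMD

/-!
Two coding facts at scale `ε` pin down both dimensions. Quantizing each letter by one of
`N = O(ε⁻ˢ)` labels, the first `n` iterates of `x` are known up to `ε` from the labels of `n + O(1)`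
coordinates, because the tail of the weights makes far coordinates negligible; hence both the
logarithm of the spanning number and the entropy of the `n`-th join are at most `(n + O(1)) log N`.
Conversely, every Bowen ball has measure at most `qⁿ` with `q = O(εˢ)`. A space of total mass one
then needs at least `q⁻ⁿ` such balls, and a partition whose atoms lie in such balls has entropy at
least `-n log q`. Dividing by `log (1 / ε)`, the constants disappear and only `s` remains.
-/

open scoped NNReal

namespace MMD

/-! ### Logarithmic asymptotics -/

section Asymptotics

lemma log_natCast_mono : Monotone fun n : ℕ => Real.log n := by
  intro a b hab
  rcases a.eq_zero_or_pos with rfl | ha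
  · simpa using Real.log_natCast_nonneg b
  · exact Real.log_le_log (mod_cast ha) (mod_cast hab)

lemma ofReal_log_natCast_le {N : ℕ} {x : ℝ} (hN : (N : ℝ) ≤ x) :
    ENNReal.ofReal (Real.log N) ≤ ENNReal.ofReal (Real.log x) := by
  rcases N.eq_zero_or_pos with rfl | hpos
  · simp
  · exact ENNReal.ofReal_le_ofReal (Real.log_le_log (mod_cast hpos) hN)

lemma limsup_div_natCast_le {u : ℕ → ℝ≥0∞} {k : ℕ} {L : ℝ}
    (hu : ∀ n : ℕ, u n ≤ ENNReal.ofReal ((n + k : ℕ) * L)) :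
    limsup (fun n : ℕ => u n / n) atTop ≤ ENNReal.ofReal L := by
  have hlim : Tendsto (fun n : ℕ => ENNReal.ofReal (L + k * L / n)) atTop
      (𝓝 (ENNReal.ofReal L)) := by
    refine ENNReal.tendsto_ofReal ?_
    simpa only [add_zero] using tendsto_const_nhds.add
      ((tendsto_const_nhds (x := k * L)).div_atTop tendsto_natCast_atTop_atTop)
  rw [← hlim.limsup_eq]
  refine limsup_le_limsup ?_
  filter_upwards [eventually_gt_atTop 0] with n hn
  have hn' : (0 : ℝ) < n := mod_cast hn
  have hsplit : L + k * L / n = (n + k : ℕ) * L / n := by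
    push_cast
    field_simp
  rw [hsplit, ENNReal.ofReal_div_of_pos hn', ENNReal.ofReal_natCast]
  gcongr
  exact hu n

lemma le_liminf_div_natCast {u : ℕ → ℝ≥0∞} {L : ℝ} (hu : ∀ n : ℕ, ENNReal.ofReal (n * L) ≤ u n) :
    ENNReal.ofReal L ≤ liminf (fun n : ℕ => u n / n) atTop := by
  refine le_liminf_of_le (by isBoundedDefault) ?_
  filter_upwards [eventually_gt_atTop 0] with n hn
  have hn' : (0 : ℝ) < n := mod_cast hn
  calc ENNReal.ofReal L = ENNReal.ofReal (n * L / n) := by rw [mul_div_cancel_left₀ _ hn'.ne']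
    _ = ENNReal.ofReal (n * L) / n := by
        rw [ENNReal.ofReal_div_of_pos hn', ENNReal.ofReal_natCast]
    _ ≤ u n / n := by gcongr; exact hu n

lemma tendsto_log_mul_rpow_div_log {C : ℝ} (hC : 0 < C) (s : ℝ≥0) :
    Tendsto (fun ε : ℝ => ENNReal.ofReal (Real.log (C * ε ^ (-(s : ℝ)))) /
      ENNReal.ofReal (Real.log (1 / ε))) (𝓝[>] 0) (𝓝 s) := by
  have hlog : Tendsto (fun ε : ℝ => Real.log (1 / ε)) (𝓝[>] 0) atTop := by
    simpa only [one_div, Real.log_inv, Function.comp_def] using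
      tendsto_neg_atBot_atTop.comp Real.tendsto_log_nhdsGT_zero
  have hlim : Tendsto (fun ε : ℝ => ENNReal.ofReal (Real.log C / Real.log (1 / ε) + s)) (𝓝[>] 0)
      (𝓝 s) := by
    rw [← ENNReal.ofReal_coe_nnreal]
    refine ENNReal.tendsto_ofReal ?_
    simpa only [zero_add] using (tendsto_const_nhds.div_atTop hlog).add_const (s : ℝ)
  refine hlim.congr' ?_
  filter_upwards [hlog.eventually_gt_atTop 0, self_mem_nhdsWithin] with ε hlogε hε
  have hε' : 0 < ε := hε
  have hsplit : Real.log (C * ε ^ (-(s : ℝ))) = Real.log C + s * Real.log (1 / ε) := by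
    rw [Real.log_mul hC.ne' (by positivity), Real.log_rpow hε', one_div, Real.log_inv, neg_mul,
      mul_neg]
  rw [hsplit, ← ENNReal.ofReal_div_of_pos hlogε, add_div, mul_div_cancel_right₀ _ hlogε.ne']

lemma tendsto_div_log_of_le_of_le {F : ℝ → ℝ≥0∞} {c C : ℝ} {s : ℝ≥0} (hc : 0 < c) (hC : 0 < C)
    (hlower : ∀ᶠ ε in 𝓝[>] 0, ENNReal.ofReal (Real.log (c * ε ^ (-(s : ℝ)))) ≤ F ε)
    (hupper : ∀ᶠ ε in 𝓝[>] 0, F ε ≤ ENNReal.ofReal (Real.log (C * ε ^ (-(s : ℝ))))) :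
    Tendsto (fun ε : ℝ => F ε / ENNReal.ofReal (Real.log (1 / ε))) (𝓝[>] 0) (𝓝 s) :=
  tendsto_of_tendsto_of_tendsto_of_le_of_le' (tendsto_log_mul_rpow_div_log hc s)
    (tendsto_log_mul_rpow_div_log hC s)
    (hlower.mono fun _ h => ENNReal.div_le_div_right h _)
    (hupper.mono fun _ h => ENNReal.div_le_div_right h _)

end Asymptotics

/-! ### Spanning sets of Bowen metrics -/

section Spanning

variable {X : Type*} [PseudoMetricSpace X] {T : X → X} {n : ℕ} {ε q : ℝ}

lemma bowenDist_le_iff {x y : X} (hε : 0 ≤ ε) :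
    bowenDist T n x y ≤ ε ↔ ∀ j : Fin n, dist (T^[(j : ℕ)] x) (T^[(j : ℕ)] y) ≤ ε :=
  ⟨fun h j => (le_ciSup (f := fun j : Fin n => dist (T^[(j : ℕ)] x) (T^[(j : ℕ)] y))
    (Set.finite_range _).bddAbove j).trans h, fun h => Real.iSup_le h hε⟩

lemma exists_spanning_finset_card_le {W : Type*} [Fintype W] {ψ : X → W}
    (hψ : ∀ x y, ψ x = ψ y → bowenDist T n x y < ε) :
    ∃ E : Finset X, E.card ≤ Fintype.card W ∧ ∀ z ∈ univ, ∃ y ∈ E, bowenDist T n z y < ε := by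
  classical
  rcases isEmpty_or_nonempty X with _ | _
  · exact ⟨∅, by simp, fun z => isEmptyElim z⟩
  refine ⟨Finset.univ.image (Function.invFun ψ), Finset.card_image_le, fun z _ =>
    ⟨Function.invFun ψ (ψ z), Finset.mem_image_of_mem _ (Finset.mem_univ _), hψ _ _ ?_⟩⟩
  exact (Function.invFun_eq ⟨z, rfl⟩).symm

lemma one_le_spanNum_mul [MeasurableSpace X] {μ : Measure X} [IsProbabilityMeasure μ] {r : ℝ≥0∞}
    (hμ : ∀ a, μ {x | bowenDist T n x a ≤ ε} ≤ r)
    (hspan : ∃ E : Finset X, ∀ z ∈ univ, ∃ y ∈ E, bowenDist T n z y < ε) :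
    1 ≤ spanNum T n ε univ * r := by
  obtain ⟨E₀, hE₀⟩ := hspan
  obtain ⟨E, hcard, hE⟩ : spanNum T n ε univ ∈ {k | ∃ E : Finset X, E.card = k ∧
      ∀ z ∈ univ, ∃ y ∈ E, bowenDist T n z y < ε} := Nat.sInf_mem ⟨_, E₀, rfl, hE₀⟩
  have hcover : (univ : Set X) ⊆ ⋃ a ∈ E, {x | bowenDist T n x a ≤ ε} := fun z hz => by
    obtain ⟨y, hy, hzy⟩ := hE z hz
    exact mem_biUnion hy hzy.le
  calc 1 = μ univ := measure_univ.symm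
    _ ≤ ∑ a ∈ E, μ {x | bowenDist T n x a ≤ ε} :=
        (measure_mono hcover).trans (measure_biUnion_finset_le _ _)
    _ ≤ ∑ _a ∈ E, r := Finset.sum_le_sum fun a _ => hμ a
    _ = spanNum T n ε univ * r := by rw [Finset.sum_const, nsmul_eq_mul, hcard]

lemma neg_log_le_spanGrowth [MeasurableSpace X] {μ : Measure X} [IsProbabilityMeasure μ]
    (hq : 0 < q) (hμ : ∀ (n : ℕ) a, μ {x | bowenDist T n x a ≤ ε} ≤ ENNReal.ofReal (q ^ n))
    (hspan : ∀ n : ℕ, ∃ E : Finset X, ∀ z ∈ univ, ∃ y ∈ E, bowenDist T n z y < ε) :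
    ENNReal.ofReal (-Real.log q) ≤ spanGrowth T ε := by
  refine (le_liminf_div_natCast fun n => ENNReal.ofReal_le_ofReal ?_).trans liminf_le_limsup
  have hmass : 1 ≤ (spanNum T n ε univ : ℝ) * q ^ n := by
    have h := one_le_spanNum_mul (hμ n) (hspan n)
    rwa [← ENNReal.ofReal_natCast, ← ENNReal.ofReal_mul (Nat.cast_nonneg _),
      ENNReal.one_le_ofReal] at h
  have hpos : (spanNum T n ε univ : ℝ) ≠ 0 := fun h => by norm_num [h] at hmass
  have hlog := Real.log_nonneg hmass
  rw [Real.log_mul hpos (by positivity), Real.log_pow] at hlog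
  linarith

lemma spanGrowth_le_log {W : ℕ → Type*} [∀ n, Fintype (W n)] {ψ : ∀ n, X → W n} {N k : ℕ}
    (hψ : ∀ n x y, ψ n x = ψ n y → bowenDist T n x y < ε)
    (hcard : ∀ n, Fintype.card (W n) = N ^ (n + k)) :
    spanGrowth T ε ≤ ENNReal.ofReal (Real.log N) := by
  refine limsup_div_natCast_le (k := k) fun n => ENNReal.ofReal_le_ofReal ?_
  obtain ⟨E, hEcard, hE⟩ := exists_spanning_finset_card_le (hψ n)
  have hle : spanNum T n ε univ ≤ N ^ (n + k) :=
    (hcard n ▸ hEcard).trans' (Nat.sInf_le ⟨E, rfl, hE⟩)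
  simpa only [Nat.cast_pow, Real.log_pow] using log_natCast_mono hle

end Spanning

/-! ### Entropy of finite partitions -/

section Entropy

variable {X : Type*} [MeasurableSpace X] {μ : Measure X} {T : X → X} {P : Finset (Set X)}

lemma neg_log_le_entP [IsProbabilityMeasure μ] {q : ℝ} (hq : 0 < q)
    (hcover : ⋃₀ (P : Set (Set X)) = univ) (hP : ∀ A ∈ P, μ A ≤ ENNReal.ofReal q) :
    ENNReal.ofReal (-Real.log q) ≤ entP μ P := by
  have hmass : 1 ≤ ∑ A ∈ P, μ A := by
    rw [← measure_univ (μ := μ), ← hcover, sUnion_eq_biUnion]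
    exact measure_biUnion_finset_le P id
  have hterm : ∀ A ∈ P, μ A * ENNReal.ofReal (-Real.log q) ≤
      ENNReal.ofReal (-((μ A).toReal * Real.log (μ A).toReal)) := fun A hA => by
    have hle : (μ A).toReal ≤ q := ENNReal.toReal_le_of_le_ofReal hq.le (hP A hA)
    nth_rw 1 [← ENNReal.ofReal_toReal (measure_ne_top μ A)]
    rw [← ENNReal.ofReal_mul ENNReal.toReal_nonneg, mul_neg]
    refine ENNReal.ofReal_le_ofReal (neg_le_neg ?_)
    rcases (ENNReal.toReal_nonneg (a := μ A)).eq_or_lt with h | h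
    · simp [← h]
    · gcongr
  calc ENNReal.ofReal (-Real.log q) ≤ (∑ A ∈ P, μ A) * ENNReal.ofReal (-Real.log q) :=
        le_mul_of_one_le_left' hmass
    _ = ∑ A ∈ P, μ A * ENNReal.ofReal (-Real.log q) := Finset.sum_mul _ _ _
    _ ≤ entP μ P := Finset.sum_le_sum hterm

lemma sum_negMulLog_le_log_card {ι : Type*} {t : Finset ι} {p : ι → ℝ} (hp : ∀ i ∈ t, 0 ≤ p i)
    (hsum : ∑ i ∈ t, p i = 1) : ∑ i ∈ t, Real.negMulLog (p i) ≤ Real.log t.card := by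
  have hcard : (0 : ℝ) < t.card := by
    rw [Nat.cast_pos, Finset.card_pos]
    exact Finset.nonempty_of_sum_ne_zero (hsum.trans_ne one_ne_zero)
  have jensen := Real.concaveOn_negMulLog.le_map_sum (t := t) (w := fun _ => (t.card : ℝ)⁻¹)
    (fun _ _ => by positivity) (by simp [hcard.ne']) hp
  simp only [smul_eq_mul, ← Finset.mul_sum, hsum, mul_one, Real.negMulLog, Real.log_inv] at jensen
  rw [neg_mul_neg] at jensen
  exact le_of_mul_le_mul_left jensen (inv_pos.2 hcard)

lemma IsFinPartition.exists_mem (hP : IsFinPartition P) (x : X) : ∃ A ∈ P, x ∈ A :=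
  mem_sUnion.1 (hP.2.2 ▸ mem_univ x)

lemma IsFinPartition.entP_le_log_card [IsProbabilityMeasure μ] (hP : IsFinPartition P) :
    entP μ P ≤ ENNReal.ofReal (Real.log P.card) := by
  have hsum : ∑ A ∈ P, (μ A).toReal = 1 := by
    rw [← ENNReal.toReal_sum fun A _ => measure_ne_top μ A,
      ← measure_biUnion_finset (f := fun A => A) (fun A hA B hB => hP.2.1 A hA B hB) hP.1]
    change (μ (⋃ A ∈ (P : Set (Set X)), A)).toReal = 1
    rw [← sUnion_eq_biUnion, hP.2.2, measure_univ, ENNReal.toReal_one]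
  have hle : ∑ A ∈ P, Real.negMulLog (μ A).toReal ≤ Real.log P.card :=
    sum_negMulLog_le_log_card (fun _ _ => ENNReal.toReal_nonneg) hsum
  have hentP : entP μ P = ∑ A ∈ P, ENNReal.ofReal (Real.negMulLog (μ A).toReal) := by
    simp only [entP, Real.negMulLog, neg_mul]
  rw [hentP, ← ENNReal.ofReal_sum_of_nonneg fun A _ =>
    Real.negMulLog_nonneg ENNReal.toReal_nonneg measureReal_le_one]
  exact ENNReal.ofReal_le_ofReal hle

lemma entP_filter_nonempty [DecidablePred (Set.Nonempty (α := X))] :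
    entP μ {A ∈ P | A.Nonempty} = entP μ P := by
  refine Finset.sum_filter_of_ne fun A _ hA => ?_
  contrapose! hA
  simp [hA]

lemma IsFinPartition.filter_nonempty [DecidablePred (Set.Nonempty (α := X))]
    (hP : IsFinPartition P) : IsFinPartition {A ∈ P | A.Nonempty} := by
  refine ⟨fun A hA => hP.1 A (Finset.mem_filter.1 hA).1, fun A hA B hB =>
    hP.2.1 A (Finset.mem_filter.1 hA).1 B (Finset.mem_filter.1 hB).1, ?_⟩
  refine eq_univ_of_forall fun x => ?_
  obtain ⟨A, hA, hxA⟩ := hP.exists_mem x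
  exact ⟨A, Finset.mem_filter.2 ⟨hA, x, hxA⟩, hxA⟩

lemma IsFinPartition.card_le {W : Type*} [Fintype W] {ψ : X → W} (hP : IsFinPartition P)
    (hne : ∀ A ∈ P, A.Nonempty) (hψ : ∀ x y, ψ x = ψ y → ∀ A ∈ P, x ∈ A → y ∈ A) :
    P.card ≤ Fintype.card W := by
  choose a ha using hne
  rw [← Fintype.card_coe]
  refine Fintype.card_le_of_injective (fun A : P => ψ (a A.1 A.2)) fun A B hAB => Subtype.ext ?_
  by_contra hdiff
  exact disjoint_left.1 (hP.2.1 A A.2 B B.2 hdiff)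
    (hψ _ _ hAB A A.2 (ha A A.2)) (ha B B.2)

lemma IsFinPartition.entP_le_log_card_of_fibers [IsProbabilityMeasure μ] {W : Type*} [Fintype W]
    {ψ : X → W} (hP : IsFinPartition P) (hψ : ∀ x y, ψ x = ψ y → ∀ A ∈ P, x ∈ A → y ∈ A) :
    entP μ P ≤ ENNReal.ofReal (Real.log (Fintype.card W)) := by
  classical
  rw [← entP_filter_nonempty]
  refine hP.filter_nonempty.entP_le_log_card.trans (ENNReal.ofReal_le_ofReal
    (log_natCast_mono (hP.filter_nonempty.card_le (ψ := ψ) ?_ ?_)))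
  · exact fun A hA => (Finset.mem_filter.1 hA).2
  · exact fun x y hxy A hA => hψ x y hxy A (Finset.mem_filter.1 hA).1

lemma mem_joinN_iff {X : Type*} {T : X → X} {P : Finset (Set X)} {n : ℕ} {A : Set X} :
    A ∈ joinN T P n ↔
      ∃ f : Fin n → Set X, (∀ j, f j ∈ P) ∧ ⋂ j : Fin n, T^[(j : ℕ)] ⁻¹' f j = A := by
  simp only [joinN, Finset.mem_image, Fintype.mem_piFinset]

lemma IsFinPartition.joinN (hP : IsFinPartition P) (hT : Measurable T) (n : ℕ) :
    IsFinPartition (MMD.joinN T P n) := by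
  refine ⟨fun A hA => ?_, fun A hA B hB hAB => ?_, eq_univ_of_forall fun x => ?_⟩
  · obtain ⟨f, hf, rfl⟩ := mem_joinN_iff.1 hA
    exact MeasurableSet.iInter fun j => hT.iterate j (hP.1 _ (hf j))
  · obtain ⟨f, hf, rfl⟩ := mem_joinN_iff.1 hA
    obtain ⟨g, hg, rfl⟩ := mem_joinN_iff.1 hB
    obtain ⟨j, hj⟩ := Function.ne_iff.1 fun h : f = g => hAB (by rw [h])
    exact ((hP.2.1 _ (hf j) _ (hg j) hj).preimage _).mono (iInter_subset _ j) (iInter_subset _ j)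
  · choose A hAP hA using hP.exists_mem
    exact ⟨_, mem_joinN_iff.2 ⟨fun j => A (T^[(j : ℕ)] x), fun j => hAP _, rfl⟩,
      mem_iInter.2 fun j => hA _⟩

end Entropy

section FiberPartition

variable {X κ : Type*} [Fintype κ]

/-- The partition of `X` into the fibers of a finite-valued map `φ`; such partitions give the upper
bounds on `infEntRate`. It is indexed by sets, so all empty fibers count as one element. -/
def fiberPartition (φ : X → κ) : Finset (Set X) :=
  letI : DecidableEq (Set X) := Classical.decEq _
  Finset.univ.image fun c => φ ⁻¹' {c}

lemma mem_fiberPartition_iff {φ : X → κ} {A : Set X} :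
    A ∈ fiberPartition φ ↔ ∃ c, φ ⁻¹' {c} = A := by
  simp [fiberPartition]

lemma isFinPartition_fiberPartition [MeasurableSpace X] [MeasurableSpace κ]
    [MeasurableSingletonClass κ] {φ : X → κ} (hφ : Measurable φ) :
    IsFinPartition (fiberPartition φ) := by
  refine ⟨fun A hA => ?_, fun A hA B hB hAB => ?_, eq_univ_of_forall fun x => ?_⟩
  · obtain ⟨c, rfl⟩ := mem_fiberPartition_iff.1 hA
    exact hφ (measurableSet_singleton c)
  · obtain ⟨c, rfl⟩ := mem_fiberPartition_iff.1 hA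
    obtain ⟨d, rfl⟩ := mem_fiberPartition_iff.1 hB
    exact Disjoint.preimage _ (disjoint_singleton.2 fun h : c = d => hAB (by rw [h]))
  · exact ⟨_, mem_fiberPartition_iff.2 ⟨φ x, rfl⟩, rfl⟩

lemma mem_of_mem_joinN_fiberPartition {φ : X → κ} {T : X → X} {n : ℕ} {A : Set X}
    (hA : A ∈ joinN T (fiberPartition φ) n) {x y : X}
    (hxy : ∀ j : Fin n, φ (T^[(j : ℕ)] x) = φ (T^[(j : ℕ)] y)) (hx : x ∈ A) : y ∈ A := by
  obtain ⟨f, hf, rfl⟩ := mem_joinN_iff.1 hA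
  refine mem_iInter.2 fun j => ?_
  obtain ⟨c, hc⟩ := mem_fiberPartition_iff.1 (hf j)
  have hxj := mem_iInter.1 hx j
  rw [← hc] at hxj ⊢
  exact (hxy j).symm.trans hxj

end FiberPartition

section EntropyRate

variable {X : Type*} [PseudoMetricSpace X] {T : X → X} {ε : ℝ}

lemma subset_setOf_bowenDist_le {P : Finset (Set X)} {n : ℕ} {D : ℝ} (hε : 0 ≤ ε)
    (hD : ∀ x y : X, dist x y ≤ D) (hdiam : ∀ A ∈ P, Metric.diam A ≤ ε) {A : Set X}
    (hA : A ∈ joinN T P n) {a : X} (ha : a ∈ A) : A ⊆ {x | bowenDist T n x a ≤ ε} := by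
  obtain ⟨f, hf, rfl⟩ := mem_joinN_iff.1 hA
  refine fun x hx => (bowenDist_le_iff hε).2 fun j => (hdiam _ (hf j)).trans' ?_
  exact Metric.dist_le_diam_of_mem (Metric.isBounded_iff.2 ⟨D, fun x _ y _ => hD x y⟩)
    (mem_iInter.1 hx j) (mem_iInter.1 ha j)

variable [MeasurableSpace X] {μ : Measure X} [IsProbabilityMeasure μ]

lemma neg_log_le_infEntRate {q D : ℝ} (hε : 0 ≤ ε) (hq : 0 < q) (hT : Measurable T)
    (hD : ∀ x y : X, dist x y ≤ D)
    (hμ : ∀ (n : ℕ) a, μ {x | bowenDist T n x a ≤ ε} ≤ ENNReal.ofReal (q ^ n)) :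
    ENNReal.ofReal (-Real.log q) ≤ infEntRate T μ ε := by
  refine le_iInf₂ fun P hP => le_iInf fun hdiam => le_liminf_div_natCast fun n => ?_
  rw [mul_neg, ← Real.log_pow]
  refine neg_log_le_entP (by positivity) (hP.joinN hT n).2.2 fun A hA => ?_
  rcases A.eq_empty_or_nonempty with rfl | ⟨a, ha⟩
  · simp
  · exact (measure_mono (subset_setOf_bowenDist_le hε hD hdiam hA ha)).trans (hμ n a)

lemma infEntRate_le_log {κ : Type*} [Finite κ] [MeasurableSpace κ] [MeasurableSingletonClass κ]
    {φ : X → κ} {W : ℕ → Type*} [∀ n, Fintype (W n)] {ψ : ∀ n, X → W n} {N k : ℕ} (hε : 0 ≤ ε)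
    (hT : Measurable T) (hφ : Measurable φ) (hdist : ∀ x y, φ x = φ y → dist x y ≤ ε)
    (hψ : ∀ n x y, ψ n x = ψ n y → ∀ j : Fin n, φ (T^[(j : ℕ)] x) = φ (T^[(j : ℕ)] y))
    (hcard : ∀ n, Fintype.card (W n) = N ^ (n + k)) :
    infEntRate T μ ε ≤ ENNReal.ofReal (Real.log N) := by
  have := Fintype.ofFinite κ
  have hP := isFinPartition_fiberPartition hφ
  have hdiam : ∀ A ∈ fiberPartition φ, Metric.diam A ≤ ε := fun A hA => by
    obtain ⟨c, rfl⟩ := mem_fiberPartition_iff.1 hA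
    exact Metric.diam_le_of_forall_dist_le hε fun x hx y hy => hdist x y (hx.trans hy.symm)
  refine (iInf₂_le_of_le _ hP (iInf_le _ hdiam)).trans
    (le_trans liminf_le_limsup (limsup_div_natCast_le (k := k) fun n => ?_))
  rw [← Real.log_pow, ← Nat.cast_pow, ← hcard n]
  exact (hP.joinN hT n).entP_le_log_card_of_fibers fun x y hxy A hA =>
    mem_of_mem_joinN_fiberPartition hA (hψ n x y hxy)

end EntropyRate

/-! ### Shifts with a weighted sum metric -/

section Shift

variable {A : Type*}

/-- The left shift on the space `A^ℤ` of bi-infinite sequences. -/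
def shift (x : ℤ → A) : ℤ → A := fun n => x (n + 1)

lemma shift_iterate_apply (j : ℕ) (x : ℤ → A) (k : ℤ) : shift^[j] x k = x (k + j) := by
  induction j generalizing x with
  | zero => simp
  | succ j ih =>
    rw [Function.iterate_succ_apply, ih, shift]
    push_cast
    rw [add_assoc]

lemma measurable_shift [MeasurableSpace A] : Measurable (shift : (ℤ → A) → ℤ → A) :=
  measurable_pi_lambda _ fun n => measurable_pi_apply (n + 1)

variable {κ : Type*}

/-- The word of labels `c (x i)` at the positions `i ∈ I` of a sequence `x`. -/
def word (c : A → κ) (I : Finset ℤ) (x : ℤ → A) : I → κ := fun i => c (x i)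

lemma word_eq_word_iff {c : A → κ} {I : Finset ℤ} {x y : ℤ → A} :
    word c I x = word c I y ↔ ∀ i ∈ I, c (x i) = c (y i) := by
  simp only [word, funext_iff, Subtype.forall]

lemma measurable_word [MeasurableSpace A] [MeasurableSpace κ] {c : A → κ} (hc : Measurable c)
    (I : Finset ℤ) : Measurable (word c I) :=
  measurable_pi_lambda _ fun i => hc.comp (measurable_pi_apply (i : ℤ))

lemma card_words_Ico (N M n : ℕ) :
    Fintype.card (Finset.Ico (-M : ℤ) (n + M) → Fin N) = N ^ (n + 2 * M) := by
  rw [Fintype.card_fun, Fintype.card_fin, Fintype.card_coe, Int.card_Ico]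
  congr 1
  omega

lemma word_shift_iterate_eq {c : A → κ} {M n : ℕ} {x y : ℤ → A}
    (hxy : word c (Finset.Ico (-M) (n + M)) x = word c (Finset.Ico (-M) (n + M)) y) (j : Fin n) :
    word c (Finset.Icc (-M) M) (shift^[(j : ℕ)] x) =
      word c (Finset.Icc (-M) M) (shift^[(j : ℕ)] y) := by
  rw [word_eq_word_iff] at hxy ⊢
  intro i hi
  rw [Finset.mem_Icc] at hi
  simp only [shift_iterate_apply]
  exact hxy _ (Finset.mem_Ico.2 (by omega))

lemma bowenDist_shift_lt_of_word_eq [PseudoMetricSpace (ℤ → A)] {c : A → κ} {M n : ℕ} {ε : ℝ}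
    (hε : 0 < ε)
    (hdist : ∀ x y, word c (Finset.Icc (-M) M) x = word c (Finset.Icc (-M) M) y →
      dist x y ≤ ε / 2) {x y : ℤ → A}
    (hxy : word c (Finset.Ico (-M) (n + M)) x = word c (Finset.Ico (-M) (n + M)) y) :
    bowenDist shift n x y < ε :=
  ((bowenDist_le_iff (half_pos hε).le).2 fun j =>
    hdist _ _ (word_shift_iterate_eq hxy j)).trans_lt (half_lt_self hε)

end Shift

section Alphabet

variable {A : Type*} [PseudoMetricSpace A] [MeasurableSpace A] {s : ℝ≥0}

variable (A) in
/-- Every small scale `ε` admits a measurable partition of `A` into `O(ε⁻ˢ)` pieces of diameter at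
most `ε`; the pieces are the fibers of a map `c` into a finite set of labels. -/
def HasCoveringExponent (s : ℝ≥0) : Prop :=
  ∃ C > 0, ∀ᶠ ε in 𝓝[>] (0 : ℝ), ∃ (N : ℕ) (c : A → Fin N), (N : ℝ) ≤ C * ε ^ (-(s : ℝ)) ∧
    Measurable c ∧ ∀ a b, c a = c b → dist a b ≤ ε

/-- The cylinders over `n` balls of radius `ε` have measure at most `(C * ε ^ s) ^ n`, as for a
product of measures on `A` satisfying Frostman's condition with exponent `s`. Only the coordinates
`0, …, n - 1` are constrained, which suffices for the Bowen balls of the shift. -/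
def HasFrostmanCylinders (μ : Measure (ℤ → A)) (s : ℝ≥0) : Prop :=
  ∃ C > 0, ∀ ε > (0 : ℝ), ∀ (n : ℕ) (a : ℤ → A),
    μ {x | ∀ j : Fin n, dist (x j) (a j) ≤ ε} ≤ ENNReal.ofReal ((C * ε ^ (s : ℝ)) ^ n)

lemma HasCoveringExponent.exists_dist_le (hA : HasCoveringExponent A s) :
    ∃ D, ∀ a b : A, dist a b ≤ D := by
  obtain ⟨C, -, hC⟩ := hA
  obtain ⟨ε, N, c, -, -, hc⟩ := hC.exists
  have hfiber : ∀ i, Bornology.IsBounded (c ⁻¹' {i}) := fun i =>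
    Metric.isBounded_iff.2 ⟨ε, fun a ha b hb => hc a b (ha.trans hb.symm)⟩
  obtain ⟨D, hD⟩ := Metric.isBounded_iff.1 (Bornology.isBounded_iUnion.2 hfiber)
  exact ⟨D, fun a b => hD (mem_iUnion.2 ⟨c a, rfl⟩) (mem_iUnion.2 ⟨c b, rfl⟩)⟩

end Alphabet

section WeightedSumDist

variable {A : Type*} [PseudoMetricSpace A] [PseudoMetricSpace (ℤ → A)] {w : ℤ → ℝ} {D : ℝ}

variable (A w) in
/-- The distance on `A^ℤ` is the sum of the distances of coordinates with summable weights `w`, as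
for `w n = 2 ^ (-|n|)`. Positivity of `w 0` lets the distance control each coordinate of
nonnegative index after enough shifts. -/
structure IsWeightedSumDist : Prop where
  summable : Summable w
  nonneg : ∀ n, 0 ≤ w n
  zero_pos : 0 < w 0
  dist_eq : ∀ x y : ℤ → A, dist x y = ∑' n, w n * dist (x n) (y n)

namespace IsWeightedSumDist

lemma tsum_pos (hw : IsWeightedSumDist A w) : 0 < ∑' n, w n :=
  hw.summable.tsum_pos hw.nonneg 0 hw.zero_pos

lemma summable_mul_dist (hw : IsWeightedSumDist A w) (hD : ∀ a b : A, dist a b ≤ D)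
    (x y : ℤ → A) : Summable fun n => w n * dist (x n) (y n) :=
  (hw.summable.mul_right D).of_nonneg_of_le (fun n => mul_nonneg (hw.nonneg n) dist_nonneg)
    fun n => mul_le_mul_of_nonneg_left (hD _ _) (hw.nonneg n)

lemma dist_zero_le (hw : IsWeightedSumDist A w) (hD : ∀ a b : A, dist a b ≤ D) (x y : ℤ → A) :
    dist (x 0) (y 0) ≤ dist x y / w 0 := by
  rw [le_div_iff₀' hw.zero_pos, hw.dist_eq]
  exact (hw.summable_mul_dist hD x y).le_tsum 0
    fun n _ => mul_nonneg (hw.nonneg n) dist_nonneg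

lemma dist_le (hw : IsWeightedSumDist A w) (hD : ∀ a b : A, dist a b ≤ D) (x y : ℤ → A) :
    dist x y ≤ (∑' n, w n) * D := by
  rw [hw.dist_eq, ← tsum_mul_right]
  exact (hw.summable_mul_dist hD x y).tsum_le_tsum
    (fun n => mul_le_mul_of_nonneg_left (hD _ _) (hw.nonneg n)) (hw.summable.mul_right D)

lemma exists_window (hw : IsWeightedSumDist A w) (hD : ∀ a b : A, dist a b ≤ D) {η : ℝ}
    (hη : 0 < η) : ∃ M : ℕ, ∀ (δ : ℝ) (x y : ℤ → A), 0 ≤ δ →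
      (∀ i ∈ Finset.Icc (-M : ℤ) M, dist (x i) (y i) ≤ δ) → dist x y ≤ (∑' n, w n) * δ + η := by
  have htail := (tendsto_tsum_compl_atTop_zero fun n => w n * D).comp
    (Finset.tendsto_Icc_neg (R := ℤ) |>.comp tendsto_natCast_atTop_atTop)
  obtain ⟨M, hM⟩ := (htail.eventually_lt_const hη).exists
  simp only [Function.comp_apply] at hM
  refine ⟨M, fun δ x y hδ hxy => ?_⟩
  set I := Finset.Icc (-M : ℤ) M
  have hsum := hw.summable_mul_dist hD x y
  rw [hw.dist_eq, ← hsum.sum_add_tsum_compl (s := I)]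
  refine add_le_add ?_ (le_trans ?_ hM.le)
  · calc ∑ n ∈ I, w n * dist (x n) (y n) ≤ ∑ n ∈ I, w n * δ :=
        Finset.sum_le_sum fun n hn => mul_le_mul_of_nonneg_left (hxy n hn) (hw.nonneg n)
      _ = (∑ n ∈ I, w n) * δ := (Finset.sum_mul _ _ _).symm
      _ ≤ (∑' n, w n) * δ := by
        gcongr
        exact hw.summable.sum_le_tsum I fun n _ => hw.nonneg n
  · exact (hsum.subtype _).tsum_le_tsum
      (fun n => mul_le_mul_of_nonneg_left (hD _ _) (hw.nonneg n))
      ((hw.summable.mul_right D).subtype _)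

end IsWeightedSumDist

end WeightedSumDist

section ShiftDimension

variable {A : Type*} [PseudoMetricSpace A] [PseudoMetricSpace (ℤ → A)] [MeasurableSpace A]
  {w : ℤ → ℝ} {s : ℝ≥0} {μ : Measure (ℤ → A)}

lemma IsWeightedSumDist.exists_quantizer (hw : IsWeightedSumDist A w)
    (hA : HasCoveringExponent A s) :
    ∃ C > 0, ∀ᶠ ε in 𝓝[>] (0 : ℝ), ∃ (N : ℕ) (c : A → Fin N) (M : ℕ),
      (N : ℝ) ≤ C * ε ^ (-(s : ℝ)) ∧ Measurable c ∧ ∀ x y,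
        word c (Finset.Icc (-M) M) x = word c (Finset.Icc (-M) M) y → dist x y ≤ ε / 2 := by
  obtain ⟨D, hD⟩ := hA.exists_dist_le
  obtain ⟨C, hC, hcover⟩ := hA
  set S := ∑' n, w n
  have hS : 0 < S := hw.tsum_pos
  have hfactor : 0 < (4 * S)⁻¹ := by positivity
  have hscale : Tendsto (fun ε : ℝ => (4 * S)⁻¹ * ε) (𝓝[>] 0) (𝓝[>] 0) := by
    refine tendsto_nhdsWithin_iff.2 ⟨?_, ?_⟩
    · exact ((continuous_const_mul _).tendsto' 0 0 (mul_zero _)).mono_left nhdsWithin_le_nhds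
    · filter_upwards [self_mem_nhdsWithin] with ε hε using mul_pos hfactor hε
  refine ⟨C * (4 * S)⁻¹ ^ (-(s : ℝ)), by positivity, ?_⟩
  filter_upwards [hscale.eventually hcover, self_mem_nhdsWithin] with ε ⟨N, c, hN, hc, hdist⟩ hε
  have hε' : 0 < ε := hε
  obtain ⟨M, hM⟩ := hw.exists_window hD (η := ε / 4) (by positivity)
  refine ⟨N, c, M, ?_, hc, fun x y hxy => ?_⟩
  · rwa [mul_assoc, ← Real.mul_rpow (by positivity) hε'.le]
  · calc dist x y ≤ S * ((4 * S)⁻¹ * ε) + ε / 4 :=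
        hM ((4 * S)⁻¹ * ε) x y (by positivity) fun i hi => hdist _ _ (word_eq_word_iff.1 hxy i hi)
      _ = ε / 2 := by field_simp; norm_num

lemma IsWeightedSumDist.exists_measure_setOf_bowenDist_le (hw : IsWeightedSumDist A w)
    {D : ℝ} (hD : ∀ a b : A, dist a b ≤ D) (hμ : HasFrostmanCylinders μ s) :
    ∃ c > 0, ∀ ε > (0 : ℝ), ∀ (n : ℕ) (a : ℤ → A),
      μ {x | bowenDist shift n x a ≤ ε} ≤ ENNReal.ofReal ((c * ε ^ (-(s : ℝ)))⁻¹ ^ n) := by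
  have hw₀ := hw.zero_pos
  obtain ⟨C, hC, hcyl⟩ := hμ
  refine ⟨C⁻¹ * w 0 ^ (s : ℝ), by positivity, fun ε hε n a => ?_⟩
  have hbase : (C⁻¹ * w 0 ^ (s : ℝ) * ε ^ (-(s : ℝ)))⁻¹ = C * (ε / w 0) ^ (s : ℝ) := by
    rw [Real.rpow_neg hε.le, Real.div_rpow hε.le hw₀.le]
    field_simp
  rw [hbase]
  refine (measure_mono fun x hx j => ?_).trans (hcyl _ (div_pos hε hw₀) n a)
  have hj : dist (shift^[(j : ℕ)] x 0) (shift^[(j : ℕ)] a 0) ≤ ε / w 0 :=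
    (hw.dist_zero_le hD _ _).trans
      (div_le_div_of_nonneg_right ((bowenDist_le_iff hε.le).1 hx j) hw₀.le)
  simpa only [shift_iterate_apply, zero_add] using hj

theorem tendsto_spanGrowth_shift_div_log [IsProbabilityMeasure μ] (hw : IsWeightedSumDist A w)
    (hA : HasCoveringExponent A s) (hμ : HasFrostmanCylinders μ s) :
    Tendsto (fun ε : ℝ => spanGrowth (shift : (ℤ → A) → ℤ → A) ε /
      ENNReal.ofReal (Real.log (1 / ε))) (𝓝[>] 0) (𝓝 s) := by
  obtain ⟨D, hD⟩ := hA.exists_dist_le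
  obtain ⟨c, hc, hball⟩ := hw.exists_measure_setOf_bowenDist_le hD hμ
  obtain ⟨C, hC, hquant⟩ := hw.exists_quantizer hA
  refine tendsto_div_log_of_le_of_le hc hC ?_ ?_
  · filter_upwards [hquant, self_mem_nhdsWithin] with ε ⟨N, φ, M, _, _, hdist⟩ hε
    have hε' : 0 < ε := hε
    rw [← neg_neg (Real.log _), ← Real.log_inv]
    refine neg_log_le_spanGrowth (by positivity) (hball ε hε) fun n => ?_
    obtain ⟨E, -, hE⟩ := exists_spanning_finset_card_le fun x y =>
      bowenDist_shift_lt_of_word_eq (n := n) hε hdist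
    exact ⟨E, hE⟩
  · filter_upwards [hquant, self_mem_nhdsWithin] with ε ⟨N, φ, M, hN, _, hdist⟩ hε
    exact (spanGrowth_le_log (fun n x y => bowenDist_shift_lt_of_word_eq hε hdist)
      (card_words_Ico N M)).trans (ofReal_log_natCast_le hN)

theorem tendsto_infEntRate_shift_div_log [IsProbabilityMeasure μ] (hw : IsWeightedSumDist A w)
    (hA : HasCoveringExponent A s) (hμ : HasFrostmanCylinders μ s) :
    Tendsto (fun ε : ℝ => infEntRate shift μ ε / ENNReal.ofReal (Real.log (1 / ε)))
      (𝓝[>] 0) (𝓝 s) := by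
  obtain ⟨D, hD⟩ := hA.exists_dist_le
  obtain ⟨c, hc, hball⟩ := hw.exists_measure_setOf_bowenDist_le hD hμ
  obtain ⟨C, hC, hquant⟩ := hw.exists_quantizer hA
  refine tendsto_div_log_of_le_of_le hc hC ?_ ?_
  · filter_upwards [self_mem_nhdsWithin] with ε hε
    have hε' : 0 < ε := hε
    rw [← neg_neg (Real.log _), ← Real.log_inv]
    exact neg_log_le_infEntRate hε'.le (by positivity) measurable_shift (hw.dist_le hD)
      (hball ε hε)
  · filter_upwards [hquant, self_mem_nhdsWithin] with ε ⟨N, φ, M, hN, hφ, hdist⟩ hε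
    have hε' : 0 < ε := hε
    exact (infEntRate_le_log hε'.le measurable_shift (measurable_word hφ _)
      (fun x y hxy => (hdist x y hxy).trans (half_lt_self hε').le)
      (fun n x y => word_shift_iterate_eq) (card_words_Ico N M)).trans (ofReal_log_natCast_le hN)

end ShiftDimension

/-! ### Sequences in the unit interval -/

section UnitInterval

lemma hasCoveringExponent_unitInterval : HasCoveringExponent unitInterval 1 := by
  refine ⟨2, two_pos, ?_⟩
  filter_upwards [Ioo_mem_nhdsGT one_pos] with ε ⟨hε, hε₁⟩
  have hlt : ∀ t : unitInterval, ⌊(t : ℝ) / ε⌋₊ < ⌊1 / ε⌋₊ + 1 := fun t =>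
    Nat.lt_succ_of_le (Nat.floor_le_floor (by gcongr; exact t.2.2))
  refine ⟨⌊1 / ε⌋₊ + 1, fun t => ⟨⌊(t : ℝ) / ε⌋₊, hlt t⟩, ?_, ?_, fun a b hab => ?_⟩
  · have hfloor : (⌊1 / ε⌋₊ : ℝ) ≤ 1 / ε := Nat.floor_le (by positivity)
    have hone : 1 ≤ 1 / ε := one_le_one_div hε hε₁.le
    rw [NNReal.coe_one, Real.rpow_neg_one, ← one_div]
    push_cast
    linarith
  · refine measurable_to_countable' fun i => ?_
    simp only [preimage, mem_singleton_iff, Fin.ext_iff]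
    exact Nat.measurable_floor.comp (measurable_subtype_coe.div_const ε)
      (measurableSet_singleton (i : ℕ))
  · have hnatFloor : ⌊(a : ℝ) / ε⌋₊ = ⌊(b : ℝ) / ε⌋₊ := congrArg Fin.val hab
    have hfloor : ⌊(a : ℝ) / ε⌋ = ⌊(b : ℝ) / ε⌋ := by
      rw [← Int.natCast_floor_eq_floor (div_nonneg a.2.1 hε.le),
        ← Int.natCast_floor_eq_floor (div_nonneg b.2.1 hε.le), hnatFloor]
    have hlt_one := Int.abs_sub_lt_one_of_floor_eq_floor hfloor
    rw [← sub_div, abs_div, abs_of_pos hε, div_lt_one hε] at hlt_one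
    exact hlt_one.le

lemma hasFrostmanCylinders_of_forall_pi_Icc {μ : Measure (ℤ → unitInterval)}
    (hμ : ∀ (J : Finset ℤ) (a b : ℤ → ℝ), (∀ n ∈ J, 0 ≤ a n ∧ a n ≤ b n ∧ b n ≤ 1) →
      μ {x : ℤ → unitInterval | ∀ n ∈ J, (x n : ℝ) ∈ Icc (a n) (b n)}
        = ∏ n ∈ J, ENNReal.ofReal (b n - a n)) :
    HasFrostmanCylinders μ 1 := by
  refine ⟨2, two_pos, fun ε hε n a => ?_⟩
  have hbox := hμ (Finset.Ico 0 n) (fun i => max 0 (a i - ε)) (fun i => min 1 (a i + ε))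
    fun i _ => ⟨le_max_left _ _, max_le (le_min zero_le_one (by linarith [(a i).2.1]))
      (le_min (by linarith [(a i).2.2]) (by linarith)), min_le_left _ _⟩
  have hsubset : {x : ℤ → unitInterval | ∀ j : Fin n, dist (x j) (a j) ≤ ε} ⊆
      {x | ∀ i ∈ Finset.Ico (0 : ℤ) n, (x i : ℝ) ∈ Icc (max 0 (a i - ε)) (min 1 (a i + ε))} := by
    intro x hx i hi
    rw [Finset.mem_Ico] at hi
    lift i to ℕ using hi.1
    have hxi : |(x i : ℝ) - a i| ≤ ε := hx ⟨i, by omega⟩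
    rw [abs_le] at hxi
    exact ⟨max_le (x i).2.1 (by linarith), le_min (x i).2.2 (by linarith)⟩
  calc μ {x | ∀ j : Fin n, dist (x j) (a j) ≤ ε}
      ≤ ∏ i ∈ Finset.Ico (0 : ℤ) n, ENNReal.ofReal (min 1 (a i + ε) - max 0 (a i - ε)) :=
        (measure_mono hsubset).trans hbox.le
    _ ≤ ∏ _i ∈ Finset.Ico (0 : ℤ) n, ENNReal.ofReal (2 * ε) := by
        gcongr with i
        linarith [le_max_right 0 ((a i : ℝ) - ε), min_le_right 1 ((a i : ℝ) + ε)]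
    _ = ENNReal.ofReal ((2 * ε ^ ((1 : ℝ≥0) : ℝ)) ^ n) := by
        rw [Finset.prod_const, Int.card_Ico, sub_zero, Int.toNat_natCast, NNReal.coe_one,
          Real.rpow_one, ENNReal.ofReal_pow (by positivity)]

lemma summable_two_zpow_neg_abs : Summable fun n : ℤ => (2 : ℝ) ^ (-|n|) := by
  refine Summable.of_nat_of_neg ?_ ?_ <;>
  · simpa using summable_geometric_two

lemma isWeightedSumDist_two_zpow_neg_abs [PseudoMetricSpace (ℤ → unitInterval)]
    (hdist : ∀ x y : ℤ → unitInterval,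
      dist x y = ∑' n : ℤ, (2 : ℝ) ^ (-|n|) * |(x n : ℝ) - y n|) :
    IsWeightedSumDist unitInterval fun n => (2 : ℝ) ^ (-|n|) :=
  ⟨summable_two_zpow_neg_abs, fun n => by positivity, by positivity, hdist⟩

end UnitInterval

end MMD

theorem stmt14_general {A : Type*} [PseudoMetricSpace A] [MeasurableSpace A]
    [PseudoMetricSpace (ℤ → A)] {w : ℤ → ℝ} {s : ℝ≥0} {μ : Measure (ℤ → A)}
    [IsProbabilityMeasure μ] (hw : IsWeightedSumDist A w) (hA : HasCoveringExponent A s)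
    (hμ : HasFrostmanCylinders μ s) :
    mdimMUpper (shift : (ℤ → A) → ℤ → A) = s ∧ mdimMLower (shift : (ℤ → A) → ℤ → A) = s ∧
      Tendsto (fun ε : ℝ => infEntRate shift μ ε / ENNReal.ofReal (Real.log (1 / ε)))
        (𝓝[>] 0) (𝓝 s) :=
  have hspan := tendsto_spanGrowth_shift_div_log hw hA hμ
  ⟨hspan.limsup_eq, hspan.liminf_eq, tendsto_infEntRate_shift_div_log hw hA hμ⟩

/-- Example: for the shift on `[0,1]^ℤ` with the metric `d(x,y) = Σ_n 2^{-|n|} |x_n - y_n|`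
and `μ` the product of Lebesgue measure, the upper and lower metric mean dimensions equal `1`
and the Rényi information dimension of `μ` equals `1`. -/
theorem stmt14 (m : MetricSpace (ℤ → unitInterval))
    (hm : ∀ x y : ℤ → unitInterval,
      @dist _ m.toPseudoMetricSpace.toDist x y
        = ∑' n : ℤ, (2 : ℝ) ^ (-|n| : ℤ) * |(x n : ℝ) - (y n : ℝ)|)
    (μ : Measure (ℤ → unitInterval)) (hμp : IsProbabilityMeasure μ)
    (hμprod : ∀ (J : Finset ℤ) (a b : ℤ → ℝ), (∀ n ∈ J, 0 ≤ a n ∧ a n ≤ b n ∧ b n ≤ 1) →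
      μ {x : ℤ → unitInterval | ∀ n ∈ J, (x n : ℝ) ∈ Set.Icc (a n) (b n)}
        = ∏ n ∈ J, ENNReal.ofReal (b n - a n)) :
    @mdimMUpper _ m.toPseudoMetricSpace (fun x n => x (n + 1)) = 1 ∧
    @mdimMLower _ m.toPseudoMetricSpace (fun x n => x (n + 1)) = 1 ∧
    Filter.Tendsto (fun ε : ℝ =>
        @infEntRate _ m.toPseudoMetricSpace _ (fun x n => x (n + 1)) μ ε
          / ENNReal.ofReal (Real.log (1 / ε)))
      (nhdsWithin 0 (Set.Ioi 0)) (nhds 1) := by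
  exact stmt14_general (isWeightedSumDist_two_zpow_neg_abs hm) hasCoveringExponent_unitInterval
    (hasFrostmanCylinders_of_forall_pi_Icc hμprod)
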